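/- Fix 1 ≤ i ≤ n²/2 and j ∈ {0,1}, and let γ ∈ u be any element satisfying K^{-1}K̂·γ = q^{-2i}·γ and F·γ = β_{2i,j}. Then F^{n²−1}E^{n²−1}γ = c·E^{2i−1}α_{2i,j} for some nonzero scalar c ∈ k. -/

import Mathlib

noncomputable section

open scoped TensorProduct

namespace QFL

/-- The defining relations of the quasi-Frobenius-Lusztig kernel `ũ_q(sl₂)`,
on the free algebra on four generators `K = ι 0`, `K̂ = ι 1`, `E = ι 2`, `F = ι 3`. -/
inductive Rel (k : Type) [Field k] (n : ℕ) (q : k) :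
    FreeAlgebra k (Fin 4) → FreeAlgebra k (Fin 4) → Prop
  | Kord : Rel k n q (FreeAlgebra.ι k (0 : Fin 4) ^ n) 1
  | Khord : Rel k n q (FreeAlgebra.ι k (1 : Fin 4) ^ n)
      ((FreeAlgebra.ι k (0 : Fin 4) ^ (n - 1)) ^ 2)
  | KKh : Rel k n q (FreeAlgebra.ι k (0 : Fin 4) * FreeAlgebra.ι k (1 : Fin 4))
      (FreeAlgebra.ι k (1 : Fin 4) * FreeAlgebra.ι k (0 : Fin 4))
  | KE : Rel k n q
      (FreeAlgebra.ι k (0 : Fin 4) * FreeAlgebra.ι k (2 : Fin 4) *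
        FreeAlgebra.ι k (0 : Fin 4) ^ (n - 1))
      (q ^ n • FreeAlgebra.ι k (2 : Fin 4))
  | KF : Rel k n q
      (FreeAlgebra.ι k (0 : Fin 4) * FreeAlgebra.ι k (3 : Fin 4) *
        FreeAlgebra.ι k (0 : Fin 4) ^ (n - 1))
      ((q ^ n)⁻¹ • FreeAlgebra.ι k (3 : Fin 4))
  | KhE : Rel k n q
      (FreeAlgebra.ι k (1 : Fin 4) * FreeAlgebra.ι k (2 : Fin 4) *
        FreeAlgebra.ι k (1 : Fin 4) ^ (n ^ 2 - 1))
      ((q ^ n * (q ^ 2)⁻¹) • FreeAlgebra.ι k (2 : Fin 4))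
  | KhF : Rel k n q
      (FreeAlgebra.ι k (1 : Fin 4) * FreeAlgebra.ι k (3 : Fin 4) *
        FreeAlgebra.ι k (1 : Fin 4) ^ (n ^ 2 - 1))
      (((q ^ n)⁻¹ * q ^ 2) • FreeAlgebra.ι k (3 : Fin 4))
  | Enil : Rel k n q (FreeAlgebra.ι k (2 : Fin 4) ^ n ^ 2) 0
  | Fnil : Rel k n q (FreeAlgebra.ι k (3 : Fin 4) ^ n ^ 2) 0
  | EF : Rel k n q
      (FreeAlgebra.ι k (3 : Fin 4) * FreeAlgebra.ι k (2 : Fin 4) -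
        q⁻¹ • (FreeAlgebra.ι k (2 : Fin 4) * FreeAlgebra.ι k (3 : Fin 4)))
      (1 - FreeAlgebra.ι k (0 : Fin 4) ^ (n - 1) * FreeAlgebra.ι k (1 : Fin 4))

/-- The algebra `ũ_q(sl₂)` as the quotient of the free algebra by the defining relations. -/
abbrev U (k : Type) [Field k] (n : ℕ) (q : k) := RingQuot (Rel k n q)

variable (k : Type) [Field k] (n : ℕ) (q : k)

def K : U k n q := RingQuot.mkAlgHom k (Rel k n q) (FreeAlgebra.ι k (0 : Fin 4))
def Kh : U k n q := RingQuot.mkAlgHom k (Rel k n q) (FreeAlgebra.ι k (1 : Fin 4))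
def E : U k n q := RingQuot.mkAlgHom k (Rel k n q) (FreeAlgebra.ι k (2 : Fin 4))
def F : U k n q := RingQuot.mkAlgHom k (Rel k n q) (FreeAlgebra.ι k (3 : Fin 4))

/-- `K⁻¹ = K^(n-1)`. -/
def Kinv : U k n q := K k n q ^ (n - 1)
/-- `K̂⁻¹ = K̂^(n²-1)`. -/
def Khinv : U k n q := Kh k n q ^ (n ^ 2 - 1)

/-- `φ_{2i} = (2/n²) Σ_{t<n²/2} q^{-2it} (K⁻¹K̂)^t`. -/
def phi (i : ℕ) : U k n q :=
  ((n ^ 2 : k)⁻¹ * 2) • ∑ t ∈ Finset.range (n ^ 2 / 2),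
    (q⁻¹ ^ (2 * i * t)) • (Kinv k n q * Kh k n q) ^ t

/-- `𝟙₀ = (1/2)(1 + KK̂^(n/2))` and `𝟙₁ = (1/2)(1 - KK̂^(n/2))`. -/
def oneJ (j : ℕ) : U k n q :=
  if j = 0 then (2 : k)⁻¹ • (1 + K k n q * Kh k n q ^ (n / 2))
  else (2 : k)⁻¹ • (1 - K k n q * Kh k n q ^ (n / 2))

/-- The idempotent `e_{2i,j} = φ_{2i} 𝟙_j`. -/
def eIdem (i j : ℕ) : U k n q := phi k n q i * oneJ k n q j

/-- `α_{2i,j} = F^(n²-1) e_{2i,j}`. -/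
def alpha (i j : ℕ) : U k n q := F k n q ^ (n ^ 2 - 1) * eIdem k n q i j

/-- `β_{2i,j} = E^(2i-2) α_{2i,j}`. -/
def beta (i j : ℕ) : U k n q := E k n q ^ (2 * i - 2) * alpha k n q i j

/-- The Gaussian number `s_q = 1 + q + ⋯ + q^(s-1)`. -/
def gauss (x : k) (s : ℕ) : k := ∑ t ∈ Finset.range s, x ^ t

/-- The span of the PBW-type monomials `F^a K^c K̂^d E^b` with `a ≤ n²-2`, `b ≤ n²-1`,
`c ≤ n-1`, `d ≤ n²-1`. -/
def pbw : Submodule k (U k n q) :=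
  Submodule.span k {x | ∃ a b c d : ℕ, a ≤ n ^ 2 - 2 ∧ b ≤ n ^ 2 - 1 ∧ c ≤ n - 1 ∧
    d ≤ n ^ 2 - 1 ∧ x = F k n q ^ a * K k n q ^ c * Kh k n q ^ d * E k n q ^ b}

/-- `γ_{2i,j}`: the unique element of the PBW span with `F·γ = β_{2i,j}`. -/
def gam (i j : ℕ) : U k n q :=
  @dite _ (∃! x, x ∈ pbw k n q ∧ F k n q * x = beta k n q i j)
    (Classical.propDecidable _) (fun h => h.choose) (fun _ => 0)

/-- The left ideal `P_{2i,j} = u·γ_{2i,j}`. -/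
def P (i j : ℕ) : Submodule (U k n q) (U k n q) :=
  Submodule.span (U k n q) {gam k n q i j}

/-- `S_{2i,j} = Soc(P_{2i,j})`, the sum of all simple submodules of `P_{2i,j}`. -/
def S (i j : ℕ) : Submodule (U k n q) (U k n q) :=
  sSup {N : Submodule (U k n q) (U k n q) | N ≤ P k n q i j ∧ IsSimpleModule (U k n q) N}

end QFL

namespace QFL

section Abstract

variable {k A : Type} [Field k] [Ring A] [Algebra k A]

lemma aux_comm (L E : A) (c : k) (h : L * E = c • (E * L)) (s : ℕ) (x : A) (d : k)
    (hx : L * x = d • x) : L * (E ^ s * x) = (c ^ s * d) • (E ^ s * x) := by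
  induction s with
  | zero => simpa using hx
  | succ s ih =>
    rw [pow_succ' E, mul_assoc E, ← mul_assoc L, h, smul_mul_assoc, mul_assoc E L, ih,
      mul_smul_comm, smul_smul]
    congr 1
    ring

lemma aux_FE (L E F : A) (p : k) (hLE : L * E = (p ^ 2) • (E * L))
    (hFE : F * E - p • (E * F) = 1 - L) (x : A) (c : k) (hx : L * x = c • x) (s : ℕ) :
    F * (E ^ (s + 1) * x) = p ^ (s + 1) • (E ^ (s + 1) * (F * x)) +
      ((∑ t ∈ Finset.range (s + 1), p ^ t) * (1 - p ^ s * c)) • (E ^ s * x) := by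
  have hFE' : F * E = p • (E * F) + (1 - L) := by rw [← hFE]; abel
  have step : ∀ y, F * (E * y) = p • (E * (F * y)) + (y - L * y) := by
    intro y
    rw [← mul_assoc, hFE', add_mul, smul_mul_assoc, mul_assoc, sub_mul, one_mul]
  induction s with
  | zero => simp [step, hx, sub_smul]
  | succ s ih =>
    have hL := aux_comm L E (p ^ 2) hLE (s + 1) x c hx
    rw [pow_succ' E (s + 1), mul_assoc E, step, ih, hL, mul_add, mul_smul_comm, mul_smul_comm,
      ← mul_assoc E (E ^ s), ← pow_succ' E s, smul_add, smul_smul, smul_smul, ← mul_assoc E,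
      add_assoc]
    have h1 : (E ^ (s + 1) * x - ((p ^ 2) ^ (s + 1) * c) • (E ^ (s + 1) * x))
        = (1 - (p ^ 2) ^ (s + 1) * c) • (E ^ (s + 1) * x) := by rw [sub_smul, one_smul]
    rw [h1, ← add_smul, ← pow_succ']
    congr 2
    have e1 := geom_sum_succ (x := p) (n := s + 1)
    have e2 := Finset.sum_range_succ (fun t => p ^ t) (s + 1)
    rw [e1] at e2
    rw [e1]
    generalize (∑ t ∈ Finset.range (s + 1), p ^ t) = G at *
    linear_combination (c * p ^ (s + 1)) * e2

lemma aux_descend (E F x : A) (a : ℕ) (d : ℕ) (g : ℕ → k)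
    (h : ∀ s, a ≤ s → s < a + d → g s ≠ 0 ∧ F * (E ^ (s + 1) * x) = g s • (E ^ s * x)) :
    ∃ c : k, c ≠ 0 ∧ F ^ d * (E ^ (a + d) * x) = c • (E ^ a * x) := by
  induction d with
  | zero => exact ⟨1, one_ne_zero, by simp⟩
  | succ d ih =>
    obtain ⟨c, hc, e⟩ := ih (fun s h1 h2 => h s h1 (by omega))
    obtain ⟨h0, h1⟩ := h (a + d) (by omega) (by omega)
    refine ⟨g (a + d) * c, mul_ne_zero h0 hc, ?_⟩
    rw [pow_succ F, mul_assoc, ← add_assoc, h1, mul_smul_comm, e, smul_smul]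

lemma aux_main (L E F : A) (q : k) (N i : ℕ) (hq : IsPrimitiveRoot q N) (hi1 : 1 ≤ i)
    (hi2 : 2 * i ≤ N)
    (hLE : L * E = (q⁻¹ ^ 2) • (E * L))
    (hFE : F * E - q⁻¹ • (E * F) = 1 - L) (hE : E ^ N = 0)
    (α γ : A) (hα : L * α = q ^ (2 * i - 2) • α) (hFα : F * α = 0)
    (hγ : L * γ = q⁻¹ ^ (2 * i) • γ) (hFγ : F * γ = E ^ (2 * i - 2) * α) :
    ∃ c : k, c ≠ 0 ∧ F ^ (N - 1) * (E ^ (N - 1) * γ) = c • (E ^ (2 * i - 1) * α) := by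
  have hp : IsPrimitiveRoot q⁻¹ N := hq.inv
  have hq0 : q ≠ 0 := hq.ne_zero (by omega)
  have hEz : ∀ m, N ≤ m → E ^ m = 0 := fun m hm => by
    rw [← Nat.add_sub_cancel' hm, pow_add, hE, zero_mul]
  have hG : ∀ s, 0 < s → s < N → (∑ t ∈ Finset.range s, q⁻¹ ^ t) ≠ 0 := by
    intro s h0 h1 h
    have := geom_sum_mul q⁻¹ s
    rw [h, zero_mul] at this
    exact hp.pow_ne_one_of_pos_of_lt (by omega) h1 (sub_eq_zero.mp this.symm)
  -- first stage
  obtain ⟨c1, hc1, e1⟩ := aux_descend E F γ (N + 1 - 2 * i) (2 * i - 2)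
    (fun s => (∑ t ∈ Finset.range (s + 1), q⁻¹ ^ t) * (1 - q⁻¹ ^ s * q⁻¹ ^ (2 * i))) (by
      intro s h1 h2
      refine ⟨mul_ne_zero (hG _ (by omega) (by omega)) ?_, ?_⟩
      · intro h
        rw [← pow_add, sub_eq_zero, show s + 2 * i = N + (s + 2 * i - N) by omega, pow_add,
          hp.pow_eq_one, one_mul] at h
        exact hp.pow_ne_one_of_pos_of_lt (by omega) (by omega) h.symm
      · rw [aux_FE L E F q⁻¹ hLE hFE γ _ hγ s, hFγ, ← mul_assoc, ← pow_add, hEz _ (by omega)]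
        simp)
  have e2 : F * (E ^ (N + 1 - 2 * i) * γ) = q⁻¹ ^ (N + 1 - 2 * i) • (E ^ (N - 1) * α) := by
    have := aux_FE L E F q⁻¹ hLE hFE γ _ hγ (N - 2 * i)
    rw [hFγ, ← mul_assoc (E ^ _) (E ^ _) α, ← pow_add, ← pow_add, show N - 2 * i + 2 * i = N by omega,
      hp.pow_eq_one, sub_self, mul_zero, zero_smul, add_zero,
      show N - 2 * i + 1 = N + 1 - 2 * i by omega,
      show N + 1 - 2 * i + (2 * i - 2) = N - 1 by omega] at this
    exact this
  obtain ⟨c3, hc3, e3⟩ := aux_descend E F α (2 * i - 1) (N - 2 * i)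
    (fun s => (∑ t ∈ Finset.range (s + 1), q⁻¹ ^ t) * (1 - q⁻¹ ^ s * q ^ (2 * i - 2))) (by
      intro s h1 h2
      refine ⟨mul_ne_zero (hG _ (by omega) (by omega)) ?_, ?_⟩
      · intro h
        rw [sub_eq_zero, show s = (s - (2 * i - 2)) + (2 * i - 2) by omega, pow_add, mul_assoc,
          ← mul_pow, inv_mul_cancel₀ hq0, one_pow, mul_one] at h
        exact hp.pow_ne_one_of_pos_of_lt (by omega) (by omega) h.symm
      · rw [aux_FE L E F q⁻¹ hLE hFE α _ hα s, hFα]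
        simp)
  refine ⟨c1 * q⁻¹ ^ (N + 1 - 2 * i) * c3,
    mul_ne_zero (mul_ne_zero hc1 (pow_ne_zero _ (inv_ne_zero hq0))) hc3, ?_⟩
  rw [show N + 1 - 2 * i + (2 * i - 2) = N - 1 by omega] at e1
  rw [show 2 * i - 1 + (N - 2 * i) = N - 1 by omega] at e3
  have hs : F ^ (N - 1) = F ^ (N - 2 * i) * (F * F ^ (2 * i - 2)) := by
    rw [← pow_succ', ← pow_add]; congr 1; omega
  rw [hs, mul_assoc, mul_assoc, e1, mul_smul_comm, e2, mul_smul_comm, mul_smul_comm, e3,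
    smul_smul, smul_smul]

/-- Turn a conjugation relation into a commutation relation. -/
lemma aux_conj (g g' x : A) (c : k) (h : g' * g = 1) (hx : g * x * g' = c • x) :
    g * x = c • (x * g) := by
  rw [← smul_mul_assoc, ← hx, mul_assoc _ g', h, mul_one]

end Abstract

section Rels

variable (k : Type) [Field k] (n : ℕ) (q : k)

lemma rK : K k n q ^ n = 1 := by
  have := RingQuot.mkAlgHom_rel k (Rel.Kord (k := k) (n := n) (q := q))
  simpa only [map_pow, map_one, K, Kh, E, F, Kinv] using this

lemma rKh : Kh k n q ^ n = (K k n q ^ (n - 1)) ^ 2 := by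
  have := RingQuot.mkAlgHom_rel k (Rel.Khord (k := k) (n := n) (q := q))
  simpa only [map_pow, K, Kh, E, F, Kinv] using this

lemma rKKh : K k n q * Kh k n q = Kh k n q * K k n q := by
  have := RingQuot.mkAlgHom_rel k (Rel.KKh (k := k) (n := n) (q := q))
  simpa only [map_mul, K, Kh, E, F, Kinv] using this

lemma rKE : K k n q * E k n q * K k n q ^ (n - 1) = q ^ n • E k n q := by
  have := RingQuot.mkAlgHom_rel k (Rel.KE (k := k) (n := n) (q := q))
  simpa only [map_mul, map_pow, map_smul, K, Kh, E, F, Kinv] using this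

lemma rKF : K k n q * F k n q * K k n q ^ (n - 1) = (q ^ n)⁻¹ • F k n q := by
  have := RingQuot.mkAlgHom_rel k (Rel.KF (k := k) (n := n) (q := q))
  simpa only [map_mul, map_pow, map_smul, K, Kh, E, F, Kinv] using this

lemma rKhE : Kh k n q * E k n q * Kh k n q ^ (n ^ 2 - 1) = (q ^ n * (q ^ 2)⁻¹) • E k n q := by
  have := RingQuot.mkAlgHom_rel k (Rel.KhE (k := k) (n := n) (q := q))
  simpa only [map_mul, map_pow, map_smul, K, Kh, E, F, Kinv] using this

lemma rKhF : Kh k n q * F k n q * Kh k n q ^ (n ^ 2 - 1) = ((q ^ n)⁻¹ * q ^ 2) • F k n q := by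
  have := RingQuot.mkAlgHom_rel k (Rel.KhF (k := k) (n := n) (q := q))
  simpa only [map_mul, map_pow, map_smul, K, Kh, E, F, Kinv] using this

lemma rE : E k n q ^ n ^ 2 = 0 := by
  have := RingQuot.mkAlgHom_rel k (Rel.Enil (k := k) (n := n) (q := q))
  simpa only [map_pow, map_zero, K, Kh, E, F, Kinv] using this

lemma rF : F k n q ^ n ^ 2 = 0 := by
  have := RingQuot.mkAlgHom_rel k (Rel.Fnil (k := k) (n := n) (q := q))
  simpa only [map_pow, map_zero, K, Kh, E, F, Kinv] using this

lemma rEF : F k n q * E k n q - q⁻¹ • (E k n q * F k n q) = 1 - Kinv k n q * Kh k n q := by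
  have := RingQuot.mkAlgHom_rel k (Rel.EF (k := k) (n := n) (q := q))
  simpa only [map_mul, map_pow, map_smul, map_sub, map_one, K, Kh, E, F, Kinv] using this

variable {n}

lemma K_Kinv (hn : 0 < n) : K k n q * Kinv k n q = 1 := by
  rw [Kinv, ← pow_succ', Nat.sub_add_cancel hn, rK]

lemma Kinv_K (hn : 0 < n) : Kinv k n q * K k n q = 1 := by
  rw [Kinv, ← pow_succ, Nat.sub_add_cancel hn, rK]

lemma Kh_pow : Kh k n q ^ n ^ 2 = 1 := by
  rw [sq n, pow_mul, rKh, ← pow_mul, ← pow_mul,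
    show (n - 1) * (2 * n) = n * ((n - 1) * 2) by ring, pow_mul, rK, one_pow]

lemma Khinv_Kh (hn : 0 < n) : Kh k n q ^ (n ^ 2 - 1) * Kh k n q = 1 := by
  rw [← pow_succ, Nat.sub_add_cancel (Nat.pow_pos hn), Kh_pow k q]

lemma L_comm (hn : 0 < n) (x : U k n q) (a b : k) (ha : a ≠ 0)
    (h1 : K k n q * x * K k n q ^ (n - 1) = a • x)
    (h2 : Kh k n q * x * Kh k n q ^ (n ^ 2 - 1) = (a * b) • x) :
    (Kinv k n q * Kh k n q) * x = b • (x * (Kinv k n q * Kh k n q)) := by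
  have c1 := aux_conj _ _ _ _ (Kinv_K k q hn) h1
  have c2 := aux_conj _ _ _ _ (Khinv_Kh k q hn) h2
  have c3 : Kinv k n q * x = a⁻¹ • (x * Kinv k n q) := by
    have : Kinv k n q * (K k n q * x) * Kinv k n q = x * Kinv k n q := by
      rw [← mul_assoc, Kinv_K k q hn, one_mul]
    rw [c1, mul_smul_comm, smul_mul_assoc, mul_assoc, mul_assoc x, K_Kinv k q hn, mul_one] at this
    rw [← this, smul_smul, inv_mul_cancel₀ ha, one_smul]
  rw [mul_assoc, c2, mul_smul_comm, ← mul_assoc, c3, smul_mul_assoc, smul_smul, mul_assoc x]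
  congr 1
  field_simp

lemma L_pow (hn : 0 < n) (h2 : 2 ∣ n) : (Kinv k n q * Kh k n q) ^ (n ^ 2 / 2) = 1 := by
  obtain ⟨m, rfl⟩ := h2
  have hc : Commute (Kinv k (2 * m) q) (Kh k (2 * m) q) := by
    have : Commute (K k (2 * m) q) (Kh k (2 * m) q) := rKKh k (2 * m) q
    exact this.pow_left _
  have e : (2 * m) ^ 2 / 2 = (2 * m) * m := by
    rw [show (2 * m) ^ 2 = 2 * ((2 * m) * m) by ring]; simp
  have e2 : Kinv k (2 * m) q ^ (2 * m) = 1 := by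
    rw [Kinv, ← pow_mul, mul_comm (2 * m - 1), pow_mul, rK, one_pow]
  rw [e, pow_mul, hc.mul_pow, e2, one_mul, rKh, ← pow_mul, ← pow_mul,
    show (2 * m - 1) * (2 * m) = (2 * m) * (2 * m - 1) by ring, pow_mul, rK, one_pow]

lemma L_phi (hn : 0 < n) (h2 : 2 ∣ n) (hq : q ^ (n ^ 2) = 1) (hq0 : q ≠ 0) (i : ℕ) :
    (Kinv k n q * Kh k n q) * phi k n q i = q ^ (2 * i) • phi k n q i := by
  have hL := L_pow k q hn h2
  have hd : 2 * (n ^ 2 / 2) = n ^ 2 := Nat.mul_div_cancel' (dvd_pow h2 two_ne_zero)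
  unfold phi
  generalize Kinv k n q * Kh k n q = L at *
  rw [mul_smul_comm, smul_comm (q ^ (2 * i))]
  congr 1
  set f : ℕ → U k n q := fun t => q⁻¹ ^ (2 * i * t) • L ^ t with hf
  have e1 : ∀ t, L * f t = q ^ (2 * i) • f (t + 1) := by
    intro t
    simp only [hf]
    rw [mul_smul_comm, smul_smul, ← pow_succ', mul_add, pow_add q⁻¹, mul_one, mul_left_comm,
      ← mul_pow, mul_inv_cancel₀ hq0, one_pow, mul_one]
  have e2 : f (n ^ 2 / 2) = f 0 := by
    simp only [hf]
    rw [hL, show 2 * i * (n ^ 2 / 2) = n ^ 2 * i by rw [← hd]; simp; ring, pow_mul, inv_pow, hq]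
    simp
  change L * ∑ t ∈ Finset.range (n ^ 2 / 2), f t =
    q ^ (2 * i) • ∑ t ∈ Finset.range (n ^ 2 / 2), f t
  rw [Finset.mul_sum, Finset.sum_congr rfl (fun t _ => e1 t), ← Finset.smul_sum]
  congr 1
  have a1 := Finset.sum_range_succ f (n ^ 2 / 2)
  have a2 := Finset.sum_range_succ' f (n ^ 2 / 2)
  rw [a1, e2] at a2
  exact (add_right_cancel a2).symm

end Rels

end QFL

open QFL in
/-- Corollary 2.7: `F^(n²-1) E^(n²-1) γ` is a nonzero multiple of `E^(2i-1) α_{2i,j}`. -/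
theorem statement4 (k : Type) [Field k] [IsAlgClosed k] [CharZero k]
    (n : ℕ) (hn : 0 < n) (h4 : 4 ∣ n) (q : k) (hq : IsPrimitiveRoot q (n ^ 2))
    (i j : ℕ) (hi1 : 1 ≤ i) (hi2 : i ≤ n ^ 2 / 2) (hj : j ≤ 1)
    (γ : U k n q)
    (hγ1 : (Kinv k n q * Kh k n q) * γ = (q ^ (-(2 * (i : ℤ)))) • γ)
    (hγ2 : F k n q * γ = beta k n q i j) :
    ∃ c : k, c ≠ 0 ∧
      F k n q ^ (n ^ 2 - 1) * (E k n q ^ (n ^ 2 - 1) * γ) =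
        c • (E k n q ^ (2 * i - 1) * alpha k n q i j) := by
  have h2 : 2 ∣ n := dvd_trans (by norm_num) h4
  have hN : 0 < n ^ 2 := by positivity
  have hd : 2 * (n ^ 2 / 2) = n ^ 2 := Nat.mul_div_cancel' (dvd_pow h2 two_ne_zero)
  have hq0 : q ≠ 0 := hq.ne_zero hN.ne'
  have hLE : (Kinv k n q * Kh k n q) * E k n q =
      (q⁻¹ ^ 2) • (E k n q * (Kinv k n q * Kh k n q)) := by
    rw [inv_pow]
    exact L_comm k q hn (E k n q) (q ^ n) _ (pow_ne_zero _ hq0) (rKE k n q) (rKhE k n q)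
  have hLF : (Kinv k n q * Kh k n q) * F k n q =
      (q ^ 2) • (F k n q * (Kinv k n q * Kh k n q)) :=
    L_comm k q hn (F k n q) (q ^ n)⁻¹ _ (inv_ne_zero (pow_ne_zero _ hq0)) (rKF k n q)
      (rKhF k n q)
  have hLe : (Kinv k n q * Kh k n q) * eIdem k n q i j = q ^ (2 * i) • eIdem k n q i j := by
    rw [eIdem, ← mul_assoc, L_phi k q hn h2 hq.pow_eq_one hq0, smul_mul_assoc]
  have hα : (Kinv k n q * Kh k n q) * alpha k n q i j =
      q ^ (2 * i - 2) • alpha k n q i j := by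
    rw [alpha, aux_comm _ _ _ hLF (n ^ 2 - 1) _ _ hLe]
    congr 1
    rw [← pow_mul, ← pow_add,
      show 2 * (n ^ 2 - 1) + 2 * i = n ^ 2 * 2 + (2 * i - 2) by omega, pow_add, pow_mul,
      hq.pow_eq_one, one_pow, one_mul]
  have hFα : F k n q * alpha k n q i j = 0 := by
    rw [alpha, ← mul_assoc, ← pow_succ', Nat.sub_add_cancel hN, rF, zero_mul]
  refine aux_main (Kinv k n q * Kh k n q) (E k n q) (F k n q) q (n ^ 2) i hq hi1 (by omega)
    hLE (rEF k n q) (rE k n q) (alpha k n q i j) γ hα hFα ?_ hγ2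
  rw [hγ1, inv_pow, zpow_neg]
  norm_cast
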